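/- arXiv:2111.15011 — 3 statements merged into one kernel-verified Lean document; each statement's English description precedes it below -/
import Mathlib

section
/- Let S be an irreducible bounded operator on a Hilbert space H₁ and S' an irreducible bounded operator on a Hilbert space H₂, and suppose S is NOT unitarily equivalent to S'. If X : H₂ → H₁ is a bounded operator satisfying XS' = SX and X(S')* = S*X, then X = 0. -/
/-!
This is Schur's lemma for irreducible operators. The relations give `X*X` commuting with `S'` and
`XX*` commuting with `S`. A self-adjoint operator in the commutant of an irreducible operator is a
real scalar (`IsIrredOp.exists_eq_algebraMap`): two distinct spectral points would produce, by
continuous functional calculus, nonzero `f(A)`, `g(A)` with `f(A) g(A) = 0`, and the kernel of `f(A)`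
would then be a nontrivial reducing subspace. So `X*X = c` and `XX* = d`; if `X ≠ 0` then `c = d > 0`
and `X / √c` is a unitary intertwining `S'` and `S`.
-/

/-- A bounded operator `T` on a complex Hilbert space is irreducible if the only orthogonal
projections (self-adjoint idempotents) commuting with `T` are `0` and `1`. -/
def IsIrredOp {H : Type*} [NormedAddCommGroup H] [InnerProductSpace ℂ H] [CompleteSpace H]
    (T : H →L[ℂ] H) : Prop :=
  ∀ P : H →L[ℂ] H, IsIdempotentElem P → IsSelfAdjoint P → P * T = T * P → P = 0 ∨ P = 1

/-- Two bounded operators (possibly on different Hilbert spaces) are unitarily equivalent if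
there is a unitary (linear isometric isomorphism) `U` with `U A = B U`. -/
def UnitEquiv {H₁ H₂ : Type*} [NormedAddCommGroup H₁] [InnerProductSpace ℂ H₁]
    [NormedAddCommGroup H₂] [InnerProductSpace ℂ H₂]
    (A : H₁ →L[ℂ] H₁) (B : H₂ →L[ℂ] H₂) : Prop :=
  ∃ U : H₁ ≃ₗᵢ[ℂ] H₂, ∀ x, U (A x) = B (U x)

open ContinuousLinearMap in
/-- If `T` commutes with `S` and `S*`, then `ker T` reduces `S`; hence for irreducible `S` the
operator `T` is zero or injective. -/
theorem IsIrredOp.eq_zero_or_injective {H : Type*} [NormedAddCommGroup H] [InnerProductSpace ℂ H]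
    [CompleteSpace H] {S T : H →L[ℂ] H} (hS : IsIrredOp S) (h1 : Commute T S)
    (h2 : Commute T (adjoint S)) : T = 0 ∨ ∀ x, T x = 0 → x = 0 := by
  set K : Submodule ℂ H := T.ker with hK
  have hKmem : ∀ x, x ∈ K ↔ T x = 0 := fun x => by simp [hK]
  have : CompleteSpace K := T.isClosed_ker.completeSpace_coe
  have hSK : ∀ x ∈ K, S x ∈ K := fun x hx => by
    rw [hKmem] at hx ⊢
    have := congrArg (fun f : H →L[ℂ] H => f x) h1.eq
    simpa [hx] using this
  have hSK' : ∀ x ∈ K, adjoint S x ∈ K := fun x hx => by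
    rw [hKmem] at hx ⊢
    have := congrArg (fun f : H →L[ℂ] H => f x) h2.eq
    simpa [hx] using this
  have hSKo : ∀ x ∈ Kᗮ, S x ∈ Kᗮ := fun x hx => by
    rw [Submodule.mem_orthogonal] at hx ⊢
    intro u hu
    rw [← adjoint_inner_left]
    exact hx _ (hSK' u hu)
  have hP : IsStarProjection K.starProjection := isStarProjection_starProjection
  have hcomm : K.starProjection * S = S * K.starProjection := by
    ext x
    refine (Submodule.eq_starProjection_of_mem_orthogonal (hSK _ (K.starProjection_apply_mem x)) ?_)
    change S x - S (K.starProjection x) ∈ Kᗮ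
    rw [← map_sub]
    exact hSKo _ (K.sub_starProjection_mem_orthogonal x)
  rcases hS _ hP.isIdempotentElem hP.isSelfAdjoint hcomm with h | h
  · right
    intro x hx
    have := Submodule.starProjection_eq_self_iff.2 ((hKmem x).2 hx)
    rw [h] at this
    simpa using this.symm
  · left
    ext x
    have := K.starProjection_apply_mem x
    rw [h] at this
    exact (hKmem x).1 this

open ContinuousLinearMap in
/-- Schur's lemma: a self-adjoint operator commuting with an irreducible operator is a real
scalar. -/
theorem IsIrredOp.exists_eq_algebraMap {H : Type*} [NormedAddCommGroup H] [InnerProductSpace ℂ H]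
    [CompleteSpace H] {S A : H →L[ℂ] H} (hS : IsIrredOp S) (hA : IsSelfAdjoint A)
    (h : Commute A S) : ∃ c : ℝ, A = algebraMap ℝ (H →L[ℂ] H) c := by
  have h' : Commute A (adjoint S) := by
    have := h.star_star
    rwa [hA.star_eq] at this
  have key : ∀ a ∈ spectrum ℝ A, ∀ b ∈ spectrum ℝ A, ¬ a < b := by
    intro a ha b hb hab
    -- `f` and `g` have disjoint supports on either side of the midpoint `m` of `a` and `b`.
    set m := (a + b) / 2 with hm
    set f : ℝ → ℝ := fun x => max (m - x) 0 with hf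
    set g : ℝ → ℝ := fun x => max (x - m) 0 with hg
    have hfc : Continuous f := by fun_prop
    have hgc : Continuous g := by fun_prop
    have hmul : cfc f A * cfc g A = 0 := by
      rw [← cfc_mul f g A hfc.continuousOn hgc.continuousOn, ← cfc_const_zero ℝ A]
      congr 1
      funext x
      rcases le_total x m with hx | hx
      · simp [hg, hx]
      · simp [hf, hx]
    have hne : ∀ k : ℝ → ℝ, Continuous k → ∀ x ∈ spectrum ℝ A, k x ≠ 0 → cfc k A ≠ 0 := by
      intro k hk x hx hkx h0
      rw [← cfc_const_zero ℝ A] at h0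
      exact hkx (eqOn_of_cfc_eq_cfc h0 hk.continuousOn continuousOn_const hA hx)
    rcases hS.eq_zero_or_injective (h.cfc_real f) (h'.cfc_real f) with h0 | hinj
    · refine hne f hfc a ha (ne_of_gt ?_) h0
      exact lt_max_of_lt_left (by linarith)
    · refine hne g hgc b hb (ne_of_gt ?_) ?_
      · exact lt_max_of_lt_left (by linarith)
      · ext x
        exact hinj _ (by simpa using congrArg (fun f : H →L[ℂ] H => f x) hmul)
  rcases (spectrum ℝ A).eq_empty_or_nonempty with he | ⟨c, hc⟩
  · exact ⟨0, CFC.eq_algebraMap_of_spectrum_subset_singleton A 0 (by simp [he]) hA⟩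
  · refine ⟨c, CFC.eq_algebraMap_of_spectrum_subset_singleton A c (fun x hx => ?_) hA⟩
    exact le_antisymm (not_lt.1 (key c hc x hx)) (not_lt.1 (key x hx c hc))

/-- If `S`, `S'` are irreducible, not unitarily equivalent, and `X : H₂ → H₁` is a bounded
operator with `X S' = S X` and `X (S')* = S* X`, then `X = 0`. -/
theorem stmt6 {H₁ H₂ : Type*} [NormedAddCommGroup H₁] [InnerProductSpace ℂ H₁] [CompleteSpace H₁]
    [NormedAddCommGroup H₂] [InnerProductSpace ℂ H₂] [CompleteSpace H₂]
    (S : H₁ →L[ℂ] H₁) (S' : H₂ →L[ℂ] H₂)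
    (hS : IsIrredOp S) (hS' : IsIrredOp S')
    (hne : ¬ UnitEquiv S S')
    (X : H₂ →L[ℂ] H₁)
    (h1 : X.comp S' = S.comp X)
    (h2 : X.comp (ContinuousLinearMap.adjoint S') = (ContinuousLinearMap.adjoint S).comp X) :
    X = 0 := by
  have h3 : S'.comp (ContinuousLinearMap.adjoint X) = (ContinuousLinearMap.adjoint X).comp S := by
    simpa [ContinuousLinearMap.adjoint_comp] using congrArg ContinuousLinearMap.adjoint h2
  have e1 : ∀ x, X (S' x) = S (X x) := fun x => congrArg (fun f : H₂ →L[ℂ] H₁ => f x) h1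
  have e3 : ∀ x, S' (X.adjoint x) = X.adjoint (S x) :=
    fun x => congrArg (fun f : H₁ →L[ℂ] H₂ => f x) h3
  obtain ⟨c, hc⟩ := hS'.exists_eq_algebraMap (A := X.adjoint.comp X)
    (by rw [IsSelfAdjoint, ContinuousLinearMap.star_eq_adjoint,
      ContinuousLinearMap.adjoint_comp, ContinuousLinearMap.adjoint_adjoint])
    (by ext x; simp [e1, e3])
  obtain ⟨d, hd⟩ := hS.exists_eq_algebraMap (A := X.comp X.adjoint)
    (by rw [IsSelfAdjoint, ContinuousLinearMap.star_eq_adjoint,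
      ContinuousLinearMap.adjoint_comp, ContinuousLinearMap.adjoint_adjoint])
    (by ext x; change X (X.adjoint (S x)) = S (X (X.adjoint x)); rw [← e3, e1])
  have hc' : ∀ x, X.adjoint (X x) = (c : ℂ) • x := fun x => by
    simpa [Algebra.algebraMap_eq_smul_one] using congrArg (fun f : H₂ →L[ℂ] H₂ => f x) hc
  have hd' : ∀ x, X (X.adjoint x) = (d : ℂ) • x := fun x => by
    simpa [Algebra.algebraMap_eq_smul_one] using congrArg (fun f : H₁ →L[ℂ] H₁ => f x) hd
  by_contra hX
  obtain ⟨v, hv⟩ : ∃ v, X v ≠ 0 := by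
    by_contra! hall
    exact hX (ContinuousLinearMap.ext hall)
  have hnorm : ∀ x, ‖X x‖ ^ 2 = c * ‖x‖ ^ 2 := fun x => by
    have h : inner ℂ (X.adjoint (X x)) x = inner ℂ (X x) (X x) :=
      ContinuousLinearMap.adjoint_inner_left _ _ _
    rw [hc', inner_smul_left, inner_self_eq_norm_sq_to_K, inner_self_eq_norm_sq_to_K,
      Complex.conj_ofReal] at h
    apply Complex.ofReal_injective
    push_cast
    exact h.symm
  have hcpos : 0 < c := by
    have h1 : 0 < c * ‖v‖ ^ 2 := by rw [← hnorm]; positivity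
    exact pos_of_mul_pos_left h1 (by positivity)
  -- Both scalars agree, since `X X* X` is `c X` and also `d X`.
  have hcd : c = d := by
    have h := hd' (X v)
    rw [hc', map_smul] at h
    exact_mod_cast smul_left_injective ℂ hv h
  subst hcd
  set r : ℝ := √c with hr
  have hrpos : 0 < r := Real.sqrt_pos.2 hcpos
  have hrr : r * r = c := Real.mul_self_sqrt hcpos.le
  have hrC : (r : ℂ) ≠ 0 := by exact_mod_cast hrpos.ne'
  have hcC : (c : ℂ) = r * r := by exact_mod_cast hrr.symm
  let U : H₂ →ₗᵢ[ℂ] H₁ :=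
    { toLinearMap := ((r : ℂ)⁻¹ • X : H₂ →L[ℂ] H₁).toLinearMap
      norm_map' := fun x => by
        have hx : ‖X x‖ = r * ‖x‖ := by
          rw [← sq_eq_sq₀ (norm_nonneg _) (by positivity), hnorm, ← hrr]
          ring
        have : ‖(r : ℂ)⁻¹ • X x‖ = ‖x‖ := by
          rw [norm_smul, hx, norm_inv, Complex.norm_real, Real.norm_of_nonneg hrpos.le]
          field_simp
        exact this }
  have hU : ∀ x, U x = (r : ℂ)⁻¹ • X x := fun _ => rfl
  have hsurj : Function.Surjective U := fun y => ⟨(r : ℂ)⁻¹ • X.adjoint y, by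
    rw [hU, map_smul, hd', hcC, smul_smul, smul_smul]
    rw [show (r : ℂ)⁻¹ * (r : ℂ)⁻¹ * (r * r) = 1 by field_simp, one_smul]⟩
  let V : H₂ ≃ₗᵢ[ℂ] H₁ := LinearIsometryEquiv.ofSurjective U hsurj
  have hV : ∀ x, V x = (r : ℂ)⁻¹ • X x := fun _ => rfl
  refine hne ⟨V.symm, fun x => V.injective ?_⟩
  rw [V.apply_symm_apply, hV, e1, ← map_smul, ← hV, V.apply_symm_apply]
end

section
/- Let Λ ⊆ ℂ be open and let K_T, K_S : Λ × Λ → M_n(ℂ) be Hermitian kernels. Suppose Ψ, Φ : Λ → M_n(ℂ) are holomorphic with Ψ(μ) and Φ(μ) invertible for every μ ∈ Λ, and K_S(μ, λ) = Ψ(μ) K_T(μ, λ) Φ(λ)* for all μ, λ ∈ Λ. Then, setting 𝒳 := Φ^{-1}Ψ (pointwise product of matrix-valued functions), one has 𝒳(μ) K_T(μ, λ) = K_T(μ, λ) 𝒳(λ)* for all μ, λ ∈ Λ. -/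
/-! Taking adjoints in `KS ν μ = Ψ ν * KT ν μ * (Φ μ)ᴴ` and using that both kernels are Hermitian
gives `Ψ μ * KT μ ν * (Φ ν)ᴴ = Φ μ * KT μ ν * (Ψ ν)ᴴ`. Cancelling `Φ μ` on the left and `(Φ ν)ᴴ` on
the right is the claim. The argument is pointwise and purely algebraic. -/

open Matrix

/-- A Hermitian kernel on the open set `Λ ⊆ ℂ`: `K` is holomorphic in the first variable,
anti-holomorphic in the second variable, and `K(μ, ν) = K(ν, μ)*`. -/
def IsHermKernel {n : ℕ} (Λ : Set ℂ) (K : ℂ → ℂ → Matrix (Fin n) (Fin n) ℂ) : Prop :=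
  (∀ ν ∈ Λ, ∀ i j, DifferentiableOn ℂ (fun z => K z ν i j) Λ) ∧
  (∀ μ ∈ Λ, ∀ i j, DifferentiableOn ℂ (fun z => (starRingEnd ℂ) (K μ z i j)) Λ) ∧
  (∀ μ ∈ Λ, ∀ ν ∈ Λ, K μ ν = (K ν μ)ᴴ)

/-- If `K_S(μ, λ) = Ψ(μ) K_T(μ, λ) Φ(λ)*` for holomorphic pointwise-invertible `Ψ`, `Φ`, then
`𝒳 := Φ⁻¹Ψ` satisfies `𝒳(μ) K_T(μ, λ) = K_T(μ, λ) 𝒳(λ)*` for all `μ, λ ∈ Λ`. -/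
theorem stmt8 {n : ℕ} (Λ : Set ℂ) (hΛ : IsOpen Λ)
    (KT KS : ℂ → ℂ → Matrix (Fin n) (Fin n) ℂ)
    (hKT : IsHermKernel Λ KT) (hKS : IsHermKernel Λ KS)
    (Ψ Φ : ℂ → Matrix (Fin n) (Fin n) ℂ)
    (hΨhol : ∀ i j, DifferentiableOn ℂ (fun z => Ψ z i j) Λ)
    (hΦhol : ∀ i j, DifferentiableOn ℂ (fun z => Φ z i j) Λ)
    (hΨinv : ∀ μ ∈ Λ, IsUnit (Ψ μ))
    (hΦinv : ∀ μ ∈ Λ, IsUnit (Φ μ))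
    (hrel : ∀ μ ∈ Λ, ∀ ν ∈ Λ, KS μ ν = Ψ μ * KT μ ν * (Φ ν)ᴴ) :
    ∀ μ ∈ Λ, ∀ ν ∈ Λ,
      ((Φ μ)⁻¹ * Ψ μ) * KT μ ν = KT μ ν * ((Φ ν)⁻¹ * Ψ ν)ᴴ := by
  intro μ hμ ν hν
  have hμu : IsUnit (Φ μ).det := (Matrix.isUnit_iff_isUnit_det _).1 (hΦinv μ hμ)
  have hνu : IsUnit ((Φ ν)ᴴ).det :=
    (Matrix.isUnit_iff_isUnit_det _).1 ((hΦinv ν hν).star)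
  -- Hermitian symmetry of `KS` and `KT` lets `Ψ` and `Φ` trade places in the relation.
  have key : Ψ μ * KT μ ν * (Φ ν)ᴴ = Φ μ * (KT μ ν * (Ψ ν)ᴴ) := by
    rw [← hrel μ hμ ν hν, hKS.2.2 μ hμ ν hν, hrel ν hν μ hμ, hKT.2.2 μ hμ ν hν]
    simp [Matrix.conjTranspose_mul]
  calc ((Φ μ)⁻¹ * Ψ μ) * KT μ ν
      = (Φ μ)⁻¹ * (Ψ μ * KT μ ν * (Φ ν)ᴴ * ((Φ ν)ᴴ)⁻¹) := by
        rw [Matrix.mul_nonsing_inv_cancel_right _ _ hνu, Matrix.mul_assoc]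
    _ = (Φ μ)⁻¹ * (Φ μ * (KT μ ν * (Ψ ν)ᴴ * ((Φ ν)ᴴ)⁻¹)) := by
        rw [key, Matrix.mul_assoc]
    _ = KT μ ν * ((Φ ν)⁻¹ * Ψ ν)ᴴ := by
        rw [Matrix.nonsing_inv_mul_cancel_left _ _ hμu, Matrix.conjTranspose_mul,
          Matrix.conjTranspose_nonsing_inv, Matrix.mul_assoc]
end

section
/- Let Λ ⊆ ℂ be open, let K_T, K_S : Λ → M_n(ℂ) be smooth (real-differentiable) matrix-valued functions with K_T(λ) and K_S(λ) invertible for every λ ∈ Λ, and let Ψ : Λ → M_n(ℂ) be holomorphic with each Ψ(λ) invertible. If the function λ ↦ K_T(λ)^{-1} Ψ(λ)^{-1} K_S(λ) is anti-holomorphic, i.e. ∂/∂λ [K_T(λ)^{-1} Ψ(λ)^{-1} K_S(λ)] = 0 on Λ, then (∂/∂λ)K_T(λ) · K_T(λ)^{-1} = Ψ(λ)^{-1} (∂/∂λ)K_S(λ) · K_S(λ)^{-1} Ψ(λ) + (Ψ^{-1})'(λ) Ψ(λ) for all λ ∈ Λ. -/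
/-!
Write `G = K_T⁻¹ Ψ⁻¹ K_S`. Near a point of `Λ` one has `K_T G = Ψ⁻¹ K_S`, and the entrywise
Wirtinger derivative obeys the Leibniz rule (`mwd_mul`). Since `∂G/∂λ = 0`, differentiating gives
`(∂K_T) G = (Ψ⁻¹)' K_S + Ψ⁻¹ ∂K_S`; multiplying on the right by `K_S⁻¹ Ψ` gives the claim.
The Leibniz rule needs the entries of the inverses to be real-differentiable, which follows from
Cramer's rule (`EntryDiff.inv`).
-/

open Matrix

/-- The Wirtinger derivative `∂f/∂λ = (∂f/∂x - i ∂f/∂y)/2` of `f : ℂ → ℂ` at `z`. -/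
noncomputable def wd (f : ℂ → ℂ) (z : ℂ) : ℂ :=
  (1 / 2) * (fderiv ℝ f z 1 - Complex.I * fderiv ℝ f z Complex.I)

/-- The entrywise Wirtinger derivative `∂F/∂λ` of a matrix-valued function. -/
noncomputable def mwd {n : ℕ} (F : ℂ → Matrix (Fin n) (Fin n) ℂ) (z : ℂ) :
    Matrix (Fin n) (Fin n) ℂ :=
  Matrix.of fun i j => wd (fun w => F w i j) z

/-- Real differentiability at `z` of every entry of a matrix-valued function. -/
def EntryDiff {n : ℕ} (F : ℂ → Matrix (Fin n) (Fin n) ℂ) (z : ℂ) : Prop :=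
  ∀ i j, DifferentiableAt ℝ (fun w => F w i j) z

theorem wd_mul {f g : ℂ → ℂ} {z : ℂ} (hf : DifferentiableAt ℝ f z)
    (hg : DifferentiableAt ℝ g z) :
    wd (fun w => f w * g w) z = wd f z * g z + f z * wd g z := by
  simp only [wd, fderiv_fun_mul hf hg, _root_.add_apply,
    _root_.smul_apply, smul_eq_mul]
  ring

theorem wd_sum {ι : Type*} (s : Finset ι) {f : ι → ℂ → ℂ} {z : ℂ}
    (hf : ∀ i ∈ s, DifferentiableAt ℝ (f i) z) :
    wd (fun w => ∑ i ∈ s, f i w) z = ∑ i ∈ s, wd (f i) z := by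
  simp only [wd, fderiv_fun_sum hf, _root_.sum_apply, Finset.mul_sum,
    ← Finset.sum_sub_distrib]

theorem EntryDiff.mul {n : ℕ} {F G : ℂ → Matrix (Fin n) (Fin n) ℂ} {z : ℂ}
    (hF : EntryDiff F z) (hG : EntryDiff G z) : EntryDiff (fun w => F w * G w) z := by
  intro i j
  simp only [Matrix.mul_apply]
  exact DifferentiableAt.fun_sum fun k _ => (hF i k).mul (hG k j)

theorem mwd_mul {n : ℕ} {F G : ℂ → Matrix (Fin n) (Fin n) ℂ} {z : ℂ}
    (hF : EntryDiff F z) (hG : EntryDiff G z) :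
    mwd (fun w => F w * G w) z = mwd F z * G z + F z * mwd G z := by
  ext i j
  simp only [mwd, Matrix.of_apply, Matrix.add_apply, Matrix.mul_apply]
  rw [wd_sum _ fun k _ => (hF i k).fun_mul (hG k j), ← Finset.sum_add_distrib]
  exact Finset.sum_congr rfl fun k _ => wd_mul (hF i k) (hG k j)

theorem mwd_congr {n : ℕ} {F G : ℂ → Matrix (Fin n) (Fin n) ℂ} {z : ℂ}
    (h : F =ᶠ[nhds z] G) : mwd F z = mwd G z := by
  ext i j
  have hij : (fun w => F w i j) =ᶠ[nhds z] fun w => G w i j := h.mono fun w hw => by simp only [hw]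
  simp only [mwd, Matrix.of_apply, wd, hij.fderiv_eq]

theorem EntryDiff.det {n : ℕ} {F : ℂ → Matrix (Fin n) (Fin n) ℂ} {z : ℂ}
    (hF : EntryDiff F z) : DifferentiableAt ℝ (fun w => (F w).det) z := by
  simp only [Matrix.det_apply']
  exact DifferentiableAt.fun_sum fun σ _ =>
    (differentiableAt_const _).mul (HasFDerivAt.finsetProd fun i _ => (hF (σ i) i).hasFDerivAt).differentiableAt

/-- By Cramer's rule, the entries of the inverse are quotients of determinants of matrices with
differentiable entries. -/
theorem EntryDiff.inv {n : ℕ} {F : ℂ → Matrix (Fin n) (Fin n) ℂ} {z : ℂ}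
    (hF : EntryDiff F z) (hz : IsUnit (F z)) : EntryDiff (fun w => (F w)⁻¹) z := by
  intro i j
  have hdet : (F z).det ≠ 0 := ((Matrix.isUnit_iff_isUnit_det _).1 hz).ne_zero
  simp only [Matrix.inv_def, Matrix.smul_apply, Ring.inverse_eq_inv', smul_eq_mul,
    Matrix.adjugate_apply]
  refine (hF.det.inv hdet).mul (EntryDiff.det fun k l => ?_)
  by_cases hk : k = j
  · subst hk
    simp only [Matrix.updateRow_self]
    exact differentiableAt_const _
  · simp only [Matrix.updateRow_ne hk]
    exact hF k l

/-- If `K_T, K_S` are smooth with invertible values, `Ψ` is holomorphic with invertible values,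
and `∂/∂λ [K_T⁻¹ Ψ⁻¹ K_S] = 0` on `Λ`, then
`(∂K_T) K_T⁻¹ = Ψ⁻¹ (∂K_S) K_S⁻¹ Ψ + (Ψ⁻¹)' Ψ` on `Λ`. -/
theorem stmt11 {n : ℕ} (Λ : Set ℂ) (hΛ : IsOpen Λ)
    (KT KS : ℂ → Matrix (Fin n) (Fin n) ℂ)
    (hKTsm : ∀ i j, ContDiffOn ℝ (⊤ : ℕ∞) (fun z => KT z i j) Λ)
    (hKSsm : ∀ i j, ContDiffOn ℝ (⊤ : ℕ∞) (fun z => KS z i j) Λ)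
    (hKTinv : ∀ μ ∈ Λ, IsUnit (KT μ))
    (hKSinv : ∀ μ ∈ Λ, IsUnit (KS μ))
    (Ψ : ℂ → Matrix (Fin n) (Fin n) ℂ)
    (hΨhol : ∀ i j, DifferentiableOn ℂ (fun z => Ψ z i j) Λ)
    (hΨinv : ∀ μ ∈ Λ, IsUnit (Ψ μ))
    (hanti : ∀ μ ∈ Λ, mwd (fun z => (KT z)⁻¹ * (Ψ z)⁻¹ * KS z) μ = 0) :
    ∀ μ ∈ Λ, mwd KT μ * (KT μ)⁻¹ =
      (Ψ μ)⁻¹ * mwd KS μ * (KS μ)⁻¹ * Ψ μ + mwd (fun z => (Ψ z)⁻¹) μ * Ψ μ := by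
  intro μ hμ
  have hmem : Λ ∈ nhds μ := hΛ.mem_nhds hμ
  have dT : EntryDiff KT μ := fun i j =>
    ((hKTsm i j).contDiffAt hmem).differentiableAt (by simp)
  have dS : EntryDiff KS μ := fun i j =>
    ((hKSsm i j).contDiffAt hmem).differentiableAt (by simp)
  have dΦ : EntryDiff (fun z => (Ψ z)⁻¹) μ :=
    EntryDiff.inv (fun i j => ((hΨhol i j).differentiableAt hmem).restrictScalars ℝ) (hΨinv μ hμ)
  have dG : EntryDiff (fun z => (KT z)⁻¹ * (Ψ z)⁻¹ * KS z) μ :=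
    ((dT.inv (hKTinv μ hμ)).mul dΦ).mul dS
  have key : mwd (fun z => KT z * ((KT z)⁻¹ * (Ψ z)⁻¹ * KS z)) μ =
      mwd (fun z => (Ψ z)⁻¹ * KS z) μ := by
    refine mwd_congr (Filter.mem_of_superset hmem fun z hz => ?_)
    have hdet := (Matrix.isUnit_iff_isUnit_det _).1 (hKTinv z hz)
    simp only [Set.mem_ofPred_eq, Matrix.mul_assoc, Matrix.mul_nonsing_inv_cancel_left _ _ hdet]
  rw [mwd_mul dT dG, mwd_mul dΦ dS, hanti μ hμ, Matrix.mul_zero, add_zero] at key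
  have hS := (Matrix.isUnit_iff_isUnit_det _).1 (hKSinv μ hμ)
  have hΨ := (Matrix.isUnit_iff_isUnit_det _).1 (hΨinv μ hμ)
  have key' := congrArg (fun M => M * ((KS μ)⁻¹ * Ψ μ)) key
  simp only [Matrix.add_mul, Matrix.mul_assoc, Matrix.mul_nonsing_inv_cancel_left _ _ hS,
    Matrix.nonsing_inv_mul _ hΨ, Matrix.mul_one] at key'
  simp only [Matrix.mul_assoc]
  rw [key', add_comm]
end
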